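/- (Multiparameter stochastic ergodic theorem, continuous case.) Let (S, 𝓑, μ) be a standard Borel space with a σ-finite measure μ, let {φ_t}_{t∈ℝ^d} be a nonsingular ℝ^d-action on (S,μ) with (s,t) ↦ φ_t(s) jointly measurable, and let w : ℝ^d × S → (0,∞) be jointly measurable such that for each t ∈ ℝ^d, w(t,·) is a version of the Radon–Nikodym derivative of the measure A ↦ μ(φ_t(A)) with respect to μ, and w(t+h,s) = w(h,s)·w(t,φ_h(s)) for all t,h ∈ ℝ^d and all s ∈ S. Let f₀ ∈ L¹(S,μ) and set f(t,s) := w(t,s) f₀(φ_t(s)). Then there exists f̃ ∈ L¹(S,μ) such that the averages A_T f := (2T)^{-d} ∫_{(−T,T]^d} f(t,·) dt converge to f̃ locally in measure as T → ∞, and f̃ is invariant: for every t ∈ ℝ^d, w(t,s) f̃(φ_t(s)) = f̃(s) for μ-a.e. s. -/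

import Mathlib

open MeasureTheory Filter

/-!
Write `U_t f = w_t · (f ∘ φ_t)` for the isometric action on `L¹` and `V_t g = √w_t · (g ∘ φ_t)` for
the one on `L²`; then `U_t (v k) = (V_t v) (V_t k)` and `√(U_t f) = V_t √f`. Let `v` be the
orthogonal projection of a strictly positive `L²` function onto the `V`-fixed vectors; every
`V`-fixed vector vanishes where `v` does, and `{v = 0}` is invariant.

* On `{v ≠ 0}`, multiplication by `v` intertwines `V` with `U`, so von Neumann's mean ergodic
  argument in `L²` gives `L¹`-convergence of the averages of every `v k`, and these products are
  dense.
* On `{v = 0}`, the functions `√(A_T |f|)` are bounded and asymptotically `V`-invariant in `L²`,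
  hence tend weakly to `0` against every vector orthogonal to the fixed ones. Indicators of subsets
  of `{v = 0}` of finite measure are such vectors, and Markov's inequality concludes.
-/

open ProbabilityTheory Topology Uniformity
open scoped ENNReal Pointwise symmDiff

theorem equicontinuous_of_norm_le {ι 𝕜 E F : Type*} [NontriviallyNormedField 𝕜]
    [SeminormedAddCommGroup E] [NormedSpace 𝕜 E] [SeminormedAddCommGroup F] [NormedSpace 𝕜 F]
    (A : ι → E →L[𝕜] F) {c : ℝ} (hA : ∀ i, ‖A i‖ ≤ c) : Equicontinuous fun i x => A i x := by
  refine (LipschitzWith.uniformEquicontinuous _ c.toNNReal fun i => ?_).equicontinuous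
  exact (A i).lipschitz.weaken (NNReal.coe_le_coe.1 ((hA i).trans (le_max_left _ _)))

theorem exists_tendsto_of_mem_closure {ι X Y : Type*} [TopologicalSpace X] [UniformSpace Y]
    [CompleteSpace Y] {l : Filter ι} [l.NeBot] {A : ι → X → Y} (hA : Equicontinuous A)
    {s : Set X} (hs : ∀ y ∈ s, ∃ z, Tendsto (A · y) l (𝓝 z)) {x : X} (hx : x ∈ closure s) :
    ∃ z, Tendsto (A · x) l (𝓝 z) := by
  rw [← cauchy_map_iff_exists_tendsto, cauchy_map_iff']
  refine fun U hU => mem_map.2 ?_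
  obtain ⟨W, hW, hWsymm, hWU⟩ := comp_comp_symm_mem_uniformity_sets hU
  obtain ⟨y, hy, hys⟩ := mem_closure_iff_nhds.1 hx _ (hA x W hW)
  have hcauchy : Tendsto (fun p : ι × ι => (A p.1 y, A p.2 y)) (l ×ˢ l) (𝓤 Y) :=
    cauchy_map_iff'.1 (cauchy_map_iff_exists_tendsto.2 (hs y hys))
  filter_upwards [hcauchy.eventually hW] with p hp
  exact hWU ⟨_, ⟨_, hy p.1, hp⟩, hWsymm.symm _ _ (hy p.2)⟩

section HilbertSpace

variable {ι κ 𝕜 E F : Type*} [RCLike 𝕜] [NormedAddCommGroup E] [InnerProductSpace 𝕜 E]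
  [NormedAddCommGroup F] [NormedSpace 𝕜 F]

/-- The subspace of common fixed vectors of a family of linear isometries. -/
def fixedSubspace (V : ι → E →ₗᵢ[𝕜] E) : Submodule 𝕜 E :=
  ⨅ t, LinearMap.eqLocus (V t).toLinearMap LinearMap.id

theorem mem_fixedSubspace {V : ι → E →ₗᵢ[𝕜] E} {x : E} :
    x ∈ fixedSubspace V ↔ ∀ t, V t x = x := by
  simp [fixedSubspace]

theorem isClosed_fixedSubspace (V : ι → E →ₗᵢ[𝕜] E) : IsClosed (fixedSubspace V : Set E) := by
  have : (fixedSubspace V : Set E) = ⋂ t, {x | V t x = x} := by ext; simp [mem_fixedSubspace]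
  exact this ▸ isClosed_iInter fun t => isClosed_eq (V t).continuous continuous_id

instance [CompleteSpace E] (V : ι → E →ₗᵢ[𝕜] E) : CompleteSpace (fixedSubspace V) :=
  (isClosed_fixedSubspace V).completeSpace_coe

theorem map_eq_self_of_inner_map_sub_self_eq_zero (V : E →ₗᵢ[𝕜] E) {x : E}
    (hx : inner 𝕜 (V x - x) x = 0) : V x = x := by
  have hinner : inner 𝕜 (V x) x = inner 𝕜 x x := by rwa [inner_sub_left, sub_eq_zero] at hx
  have hnorm := norm_sub_sq (𝕜 := 𝕜) (V x) x
  rw [V.norm_map, hinner, inner_self_eq_norm_sq] at hnorm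
  have : ‖V x - x‖ ^ 2 = 0 := by rw [hnorm]; ring
  simpa [sub_eq_zero] using this

theorem orthogonal_fixedSubspace_le [CompleteSpace E] (V : ι → E →ₗᵢ[𝕜] E) {C : Submodule 𝕜 E}
    (hC : IsClosed (C : Set E)) (hV : ∀ t x, V t x - x ∈ C) : (fixedSubspace V)ᗮ ≤ C := by
  have : CompleteSpace C := hC.completeSpace_coe
  rw [← C.orthogonal_orthogonal]
  refine Submodule.orthogonal_le fun x hx => mem_fixedSubspace.2 fun t => ?_
  exact map_eq_self_of_inner_map_sub_self_eq_zero (V t) (hx _ (hV t x))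

theorem tendsto_zero_of_mem_orthogonal_fixedSubspace [CompleteSpace E] (V : ι → E →ₗᵢ[𝕜] E)
    {l : Filter κ} (A : κ → E →L[𝕜] F) {c : ℝ} (hA : ∀ i, ‖A i‖ ≤ c)
    (hAV : ∀ t x, Tendsto (fun i => A i (V t x - x)) l (𝓝 0)) {x : E}
    (hx : x ∈ (fixedSubspace V)ᗮ) : Tendsto (fun i => A i x) l (𝓝 0) := by
  let C : Submodule 𝕜 E :=
    { carrier := {x | Tendsto (fun i => A i x) l (𝓝 0)}
      add_mem' := fun hx hy => by simpa using Tendsto.add hx hy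
      zero_mem' := by simpa using tendsto_const_nhds
      smul_mem' := fun a x hx => by simpa using Tendsto.const_smul hx a }
  have hC : IsClosed (C : Set E) :=
    (equicontinuous_of_norm_le A hA).isClosed_setOfPred_tendsto continuous_const
  exact orthogonal_fixedSubspace_le V hC hAV hx

theorem tendsto_inner_of_mem_orthogonal_fixedSubspace [CompleteSpace E] (V : ι → E →ₗᵢ[𝕜] E)
    {l : Filter κ} {r : κ → E} {c : ℝ} (hr : ∀ i, ‖r i‖ ≤ c)
    (hrV : ∀ t, Tendsto (fun i => V t (r i) - r i) l (𝓝 0)) {x : E}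
    (hx : x ∈ (fixedSubspace V)ᗮ) : Tendsto (fun i => inner 𝕜 (r i) x) l (𝓝 0) := by
  refine tendsto_zero_of_mem_orthogonal_fixedSubspace V (fun i => innerSL 𝕜 (r i))
    (fun i => (innerSL_apply_norm (𝕜 := 𝕜) (r i)).trans_le (hr i)) (fun t y => ?_) hx
  have hinner : ∀ i, inner 𝕜 (r i) (V t y - y) = -inner 𝕜 (V t (r i) - r i) (V t y) := fun i => by
    rw [inner_sub_left, inner_sub_right, (V t).inner_map_map, neg_sub]
  simpa [hinner] using ((hrV t).inner (𝕜 := 𝕜) (tendsto_const_nhds (x := V t y))).neg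

end HilbertSpace

section ConvergenceInMeasure

variable {ι S E : Type*} [MeasurableSpace S] [NormedAddCommGroup E] {μ : Measure S} {l : Filter ι}

theorem tendstoInMeasure_add {f f' : ι → S → E} {g g' : S → E} (hf : TendstoInMeasure μ f l g)
    (hf' : TendstoInMeasure μ f' l g') : TendstoInMeasure μ (f + f') l (g + g') := by
  rw [tendstoInMeasure_iff_norm] at *
  intro ε hε
  have hsum := (hf (ε / 2) (half_pos hε)).add (hf' (ε / 2) (half_pos hε))
  rw [add_zero] at hsum
  refine tendsto_of_tendsto_of_tendsto_of_le_of_le tendsto_const_nhds hsum (fun _ => zero_le)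
    fun i => (measure_mono fun s hs => ?_).trans (measure_union_le _ _)
  have htriangle : ‖(f + f') i s - (g + g') s‖ ≤ ‖f i s - g s‖ + ‖f' i s - g' s‖ := by
    simpa only [Pi.add_apply, add_sub_add_comm] using norm_add_le (f i s - g s) (f' i s - g' s)
  by_contra! hlt
  simp only [Set.mem_union, Set.mem_ofPred_eq, not_or, not_le] at hlt hs
  linarith

/-- Convergence in measure on every measurable set of finite measure. -/
def TendstoLocallyInMeasure (μ : Measure S) (f : ι → S → E) (l : Filter ι) (g : S → E) : Prop :=
  ∀ B, MeasurableSet B → μ B < ⊤ → TendstoInMeasure (μ.restrict B) f l g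

namespace TendstoLocallyInMeasure

theorem of_tendsto_Lp {p : ℝ≥0∞} [Fact (1 ≤ p)] {f : ι → Lp E p μ} {g : Lp E p μ}
    (hf : Tendsto f l (𝓝 g)) : TendstoLocallyInMeasure μ (fun i => f i) l g :=
  fun _ _ _ ε hε => tendsto_of_tendsto_of_tendsto_of_le_of_le tendsto_const_nhds
    (tendstoInMeasure_of_tendsto_Lp hf ε hε) (fun _ => zero_le)
    fun _ => Measure.restrict_apply_le _ _

theorem add {f f' : ι → S → E} {g g' : S → E} (hf : TendstoLocallyInMeasure μ f l g)
    (hf' : TendstoLocallyInMeasure μ f' l g') :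
    TendstoLocallyInMeasure μ (f + f') l (g + g') :=
  fun B hB hμB => tendstoInMeasure_add (hf B hB hμB) (hf' B hB hμB)

theorem congr {f f' : ι → S → E} {g g' : S → E} (hf : TendstoLocallyInMeasure μ f l g)
    (hff' : ∀ i, f i =ᵐ[μ] f' i) (hgg' : g =ᵐ[μ] g') : TendstoLocallyInMeasure μ f' l g' :=
  fun B hB hμB => (hf B hB hμB).congr (fun i => ae_restrict_of_ae (hff' i)) (ae_restrict_of_ae hgg')

theorem tendsto_measure_lt_norm_sub_inter {f : ι → S → E} {g : S → E}
    (hf : TendstoLocallyInMeasure μ f l g) {ε : ℝ} (hε : 0 < ε) {B : Set S} (hB : MeasurableSet B)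
    (hμB : μ B < ⊤) : Tendsto (fun i => μ ({s | ε < ‖f i s - g s‖} ∩ B)) l (𝓝 0) := by
  refine tendsto_of_tendsto_of_tendsto_of_le_of_le tendsto_const_nhds
    (tendstoInMeasure_iff_norm.1 (hf B hB hμB) ε hε) (fun _ => zero_le) fun i => ?_
  rw [← Measure.restrict_apply' hB]
  exact measure_mono fun s (hs : ε < _) => hs.le

end TendstoLocallyInMeasure

theorem tendstoInMeasure_zero_of_tendsto_integral_sqrt {f g : ι → S → ℝ}
    (hfg : ∀ i, ∀ᵐ s ∂μ, |f i s| ≤ g i s) (hg : ∀ i, Integrable (fun s => √(g i s)) μ)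
    (hlim : Tendsto (fun i => ∫ s, √(g i s) ∂μ) l (𝓝 0)) : TendstoInMeasure μ f l 0 := by
  have hsqrt : TendstoInMeasure μ (fun i s => √(g i s)) l 0 := by
    refine tendstoInMeasure_of_tendsto_eLpNorm one_ne_zero (fun i => (hg i).aestronglyMeasurable)
      aestronglyMeasurable_zero ?_
    simpa [eLpNorm_one_eq_lintegral_enorm, ← ofReal_integral_norm_eq_lintegral_enorm, hg,
      abs_of_nonneg, Real.sqrt_nonneg] using ENNReal.tendsto_ofReal hlim
  rw [tendstoInMeasure_iff_norm] at hsqrt ⊢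
  intro ε hε
  refine tendsto_of_tendsto_of_tendsto_of_le_of_le tendsto_const_nhds
    (hsqrt √ε (Real.sqrt_pos.2 hε)) (fun _ => zero_le) fun i => measure_mono_ae ?_
  filter_upwards [hfg i] with s hs (hεs : ε ≤ ‖f i s - 0‖)
  change √ε ≤ ‖√(g i s) - 0‖
  rw [sub_zero, Real.norm_eq_abs] at *
  exact (Real.sqrt_le_sqrt (hεs.trans hs)).trans (le_abs_self _)

end ConvergenceInMeasure

section LpSpaces

variable {S : Type*} [MeasurableSpace S] {μ : Measure S}

theorem sq_sqrt_sub_sqrt_le (a b : ℝ) : (√a - √b) ^ 2 ≤ |a - b| := by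
  wlog hab : b ≤ a generalizing a b
  · simpa only [abs_sub_comm a, ← sq_abs (√a - √b), abs_sub_comm √a, sq_abs]
      using this b a (le_of_not_ge hab)
  have hsqrt := Real.sqrt_le_sqrt hab
  have hb := Real.sqrt_nonneg b
  rcases le_total b 0 with hb0 | hb0
  · rw [Real.sqrt_eq_zero_of_nonpos hb0, sub_zero]
    rcases le_total a 0 with ha0 | ha0
    · simp [Real.sqrt_eq_zero_of_nonpos ha0]
    · rw [Real.sq_sqrt ha0, abs_of_nonneg (sub_nonneg.2 hab)]
      linarith
  · rw [abs_of_nonneg (sub_nonneg.2 hab)]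
    nlinarith [Real.sq_sqrt hb0, Real.sq_sqrt (hb0.trans hab)]

theorem memLp_two_sqrt {f : S → ℝ} (hf : Integrable f μ) : MemLp (fun s => √(f s)) 2 μ := by
  have hm : AEStronglyMeasurable (fun s => √(f s)) μ :=
    Real.continuous_sqrt.comp_aestronglyMeasurable hf.aestronglyMeasurable
  refine (memLp_two_iff_integrable_sq hm).2 (hf.mono (hm.pow 2) (.of_forall fun s => ?_))
  simpa using sq_sqrt_sub_sqrt_le (f s) 0

/-- The pointwise square root `L¹ → L²`; negative values are sent to `0`. -/
noncomputable def sqrtLp (x : Lp ℝ 1 μ) : Lp ℝ 2 μ :=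
  (memLp_two_sqrt (L1.integrable_coeFn x)).toLp

theorem coeFn_sqrtLp (x : Lp ℝ 1 μ) : sqrtLp x =ᵐ[μ] fun s => √(x s) :=
  MemLp.coeFn_toLp _

theorem norm_sqrtLp_sub_sq_le (x y : Lp ℝ 1 μ) : ‖sqrtLp x - sqrtLp y‖ ^ 2 ≤ ‖x - y‖ := by
  rw [← real_inner_self_eq_norm_sq, L2.inner_def, L1.norm_eq_integral_norm]
  refine integral_mono_ae (L2.integrable_inner _ _) (L1.integrable_coeFn _).norm ?_
  filter_upwards [Lp.coeFn_sub (sqrtLp x) (sqrtLp y), Lp.coeFn_sub x y, coeFn_sqrtLp x,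
    coeFn_sqrtLp y] with s hsqrt hsub hx hy
  rw [hsqrt, hsub, Pi.sub_apply, Pi.sub_apply, hx, hy, real_inner_self_eq_norm_sq,
    Real.norm_eq_abs, sq_abs]
  exact sq_sqrt_sub_sqrt_le _ _

theorem norm_sqrtLp_sq_le (x : Lp ℝ 1 μ) : ‖sqrtLp x‖ ^ 2 ≤ ‖x‖ := by
  have hzero : sqrtLp (0 : Lp ℝ 1 μ) = 0 := by
    refine Lp.ext ?_
    filter_upwards [coeFn_sqrtLp (0 : Lp ℝ 1 μ), Lp.coeFn_zero ℝ 1 μ, Lp.coeFn_zero ℝ 2 μ]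
      with s hsqrt hone htwo
    rw [hsqrt, hone, htwo, Pi.zero_apply, Real.sqrt_zero]
  simpa [hzero] using norm_sqrtLp_sub_sq_le x 0

/-- The product `L² × L² → L¹`, as a bounded bilinear map. -/
noncomputable def mulLp : Lp ℝ 2 μ →L[ℝ] Lp ℝ 2 μ →L[ℝ] Lp ℝ 1 μ :=
  (ContinuousLinearMap.mul ℝ ℝ).holderL μ 2 2 1

theorem coeFn_mulLp (v k : Lp ℝ 2 μ) : mulLp v k =ᵐ[μ] fun s => v s * k s :=
  (ContinuousLinearMap.mul ℝ ℝ).coeFn_holder v k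

theorem exists_mulLp_eq_indicator (v : Lp ℝ 2 μ) (x : Lp ℝ 1 μ)
    (hx : ∀ᵐ s ∂μ, v s = 0 → x s = 0) (n : ℕ) :
    ∃ k, mulLp v k =ᵐ[μ] {s | |x s| ≤ n * v s ^ 2}.indicator x := by
  have hxm := (Lp.stronglyMeasurable x).measurable
  have hvm := (Lp.stronglyMeasurable v).measurable
  set E := {s | |x s| ≤ n * v s ^ 2}
  have hE : MeasurableSet E := measurableSet_le hxm.abs ((hvm.pow_const 2).const_mul _)
  have hk : MemLp (E.indicator fun s => x s / v s) 2 μ := by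
    refine ((Lp.memLp v).const_mul (n : ℝ)).mono
      ((hxm.div hvm).indicator hE).aestronglyMeasurable (.of_forall fun s => ?_)
    rw [norm_indicator_eq_indicator_norm]
    refine Set.indicator_apply_le' (fun hs : |x s| ≤ n * v s ^ 2 => ?_) fun _ => norm_nonneg _
    rw [norm_div]
    refine div_le_of_le_mul₀ (norm_nonneg _) (norm_nonneg _) (hs.trans_eq ?_)
    rw [norm_mul, mul_assoc, ← pow_two, Real.norm_natCast, Real.norm_eq_abs, sq_abs]
  refine ⟨hk.toLp, ?_⟩
  filter_upwards [coeFn_mulLp v hk.toLp, hk.coeFn_toLp, hx] with s hmul hks hvx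
  rw [hmul, hks]
  by_cases hs : s ∈ E <;> by_cases hv : v s = 0 <;> simp [hs, hv, hvx, mul_div_cancel₀]

theorem tendsto_of_ae_eq_indicator {x : Lp ℝ 1 μ} {y : ℕ → Lp ℝ 1 μ} {E : ℕ → Set S}
    (hy : ∀ n, y n =ᵐ[μ] (E n).indicator x) (hE : ∀ᵐ s ∂μ, x s ≠ 0 → ∀ᶠ n in atTop, s ∈ E n) :
    Tendsto y atTop (𝓝 x) := by
  have hnorm : ∀ n, ‖y n - x‖ = ∫ s, ‖y n s - x s‖ ∂μ := fun n => by
    rw [L1.norm_eq_integral_norm]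
    exact integral_congr_ae ((Lp.coeFn_sub (y n) x).fun_comp norm)
  rw [tendsto_iff_norm_sub_tendsto_zero]
  simp only [hnorm]
  rw [← integral_zero S ℝ (μ := μ)]
  refine tendsto_integral_of_dominated_convergence (fun s => ‖x s‖)
    (fun n => ((Lp.aestronglyMeasurable _).sub (Lp.aestronglyMeasurable _)).norm)
    (L1.integrable_coeFn x).norm (fun n => ?_) ?_
  · filter_upwards [hy n] with s hs
    by_cases hsE : s ∈ E n <;> simp [hs, hsE]
  · filter_upwards [ae_all_iff.2 hy, hE] with s hs hsE
    refine tendsto_const_nhds.congr' ?_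
    by_cases hxs : x s = 0
    · simp [hs, Set.indicator, hxs]
    · filter_upwards [hsE hxs] with n hn
      simp [hs, hn]

theorem mem_closure_range_mulLp {v : Lp ℝ 2 μ} {x : Lp ℝ 1 μ}
    (hx : ∀ᵐ s ∂μ, v s = 0 → x s = 0) : x ∈ closure (Set.range (mulLp v)) := by
  choose k hk using exists_mulLp_eq_indicator v x hx
  refine mem_closure_of_tendsto (tendsto_of_ae_eq_indicator hk ?_)
    (Eventually.of_forall fun n => ⟨k n, rfl⟩)
  filter_upwards [hx] with s hs hxs
  have hv : 0 < v s ^ 2 := by have := mt hs hxs; positivity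
  filter_upwards [eventually_ge_atTop ⌈|x s| / v s ^ 2⌉₊] with n hn
  exact (div_le_iff₀ hv).1 (Nat.ceil_le.1 hn)

theorem exists_Lp_two_pos (μ : Measure S) [SigmaFinite μ] :
    ∃ p : Lp ℝ 2 μ, ∀ᵐ s ∂μ, 0 < p s := by
  obtain ⟨g, hgpos, hgm, hgint⟩ := exists_pos_lintegral_lt_of_sigmaFinite μ one_ne_zero
  have hg : Integrable (fun s => (g s : ℝ)) μ :=
    ⟨hgm.coe_nnreal_real.aestronglyMeasurable, by
      simpa [HasFiniteIntegral] using hgint.trans ENNReal.one_lt_top⟩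
  refine ⟨(memLp_two_sqrt hg).toLp, ?_⟩
  filter_upwards [(memLp_two_sqrt hg).coeFn_toLp] with s hs
  rw [hs]
  exact Real.sqrt_pos.2 (hgpos s)

theorem ae_eq_zero_of_inner_eq_zero {q p : Lp ℝ 2 μ} (hq : ∀ᵐ s ∂μ, 0 ≤ q s)
    (hp : ∀ᵐ s ∂μ, 0 < p s) (hqp : inner ℝ q p = 0) : q =ᵐ[μ] 0 := by
  have hnonneg : 0 ≤ᵐ[μ] fun s => inner ℝ (q s) (p s) := by
    filter_upwards [hq, hp] with s hqs hps
    exact mul_nonneg hps.le hqs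
  rw [L2.inner_def, integral_eq_zero_iff_of_nonneg_ae hnonneg (L2.integrable_inner q p)] at hqp
  filter_upwards [hqp, hp] with s hs hps
  exact (mul_eq_zero.1 hs).resolve_left hps.ne'

theorem indicatorConstLp_mem_orthogonal {W : Submodule ℝ (Lp ℝ 2 μ)} {B : Set S}
    (hB : MeasurableSet B) (hμB : μ B ≠ ∞) (hW : ∀ q ∈ W, ∀ᵐ s ∂μ, s ∈ B → q s = 0) :
    indicatorConstLp 2 hB hμB (1 : ℝ) ∈ Wᗮ := by
  refine (Submodule.mem_orthogonal' _ _).2 fun q hq => ?_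
  rw [L2.inner_indicatorConstLp_one]
  exact setIntegral_eq_zero_of_ae_eq_zero (hW q hq)

end LpSpaces

theorem map_add_left_cond {G : Type*} [AddGroup G] [MeasurableSpace G] [MeasurableAdd G]
    (ν : Measure G) [ν.IsAddLeftInvariant] (u : G) (D : Set G) :
    ν[|D].map (u + ·) = ν[|u +ᵥ D] := by
  have hpreimage : (u + ·) ⁻¹' (u +ᵥ D) = D := by ext; simp [Set.mem_vadd_set]
  have hrestrict := (measurableEmbedding_addLeft u).restrict_map ν (u +ᵥ D)
  rw [map_add_left_eq_self, hpreimage] at hrestrict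
  rw [ProbabilityTheory.cond, ProbabilityTheory.cond, Measure.map_smul, ← hrestrict, measure_vadd]

/-- A nonsingular measurable action `φ` of `G` on `(S, μ)`, together with a jointly measurable
version `w t = d(μ ∘ φ_t)/dμ` of its Radon–Nikodym derivatives that is strictly positive and
satisfies the cocycle identity everywhere. Since `φ_t` is invertible with inverse `φ_{-t}`, the
measure `A ↦ μ (φ_t A)` is encoded as `μ.map (φ (-t))`. -/
structure IsRadonNikodymCocycle {G S : Type*} [AddGroup G] [MeasurableSpace G] [MeasurableSpace S]
    (μ : Measure S) (φ : G → S → S) (w : G → S → ℝ) : Prop where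
  measurable_action : Measurable fun p : G × S => φ p.1 p.2
  action_zero (s : S) : φ 0 s = s
  action_add (t u : G) (s : S) : φ (t + u) s = φ t (φ u s)
  map_absolutelyContinuous (t : G) : μ.map (φ t) ≪ μ
  measurable_density : Measurable fun p : G × S => w p.1 p.2
  density_pos (t : G) (s : S) : 0 < w t s
  density_ae_eq (t : G) : (fun s => ENNReal.ofReal (w t s)) =ᵐ[μ] (μ.map (φ (-t))).rnDeriv μ
  density_add (t u : G) (s : S) : w (t + u) s = w u s * w t (φ u s)

namespace IsRadonNikodymCocycle

section Koopman

variable {G S : Type*} [AddGroup G] [MeasurableSpace G] [MeasurableSpace S] {μ : Measure S}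
  {φ : G → S → S} {w : G → S → ℝ}

theorem quasiMeasurePreserving (h : IsRadonNikodymCocycle μ φ w) (t : G) :
    Measure.QuasiMeasurePreserving (φ t) μ μ :=
  ⟨h.measurable_action.comp measurable_prodMk_left, h.map_absolutelyContinuous t⟩

theorem ae_eq_comp {β : Type*} (h : IsRadonNikodymCocycle μ φ w) (t : G) {f g : S → β}
    (hfg : f =ᵐ[μ] g) : ∀ᵐ s ∂μ, f (φ t s) = g (φ t s) :=
  (h.quasiMeasurePreserving t).ae_eq_comp hfg

theorem measurable_density_right (h : IsRadonNikodymCocycle μ φ w) (t : G) : Measurable (w t) :=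
  h.measurable_density.comp measurable_prodMk_left

theorem aestronglyMeasurable_comp (h : IsRadonNikodymCocycle μ φ w) (t : G) {f : S → ℝ}
    (hf : AEStronglyMeasurable f μ) : AEStronglyMeasurable (fun s => f (φ t s)) μ :=
  hf.comp_quasiMeasurePreserving (h.quasiMeasurePreserving t)

variable [SigmaFinite μ]

theorem lintegral_density_mul_comp (h : IsRadonNikodymCocycle μ φ w) (t : G) {g : S → ℝ≥0∞}
    (hg : AEMeasurable g μ) :
    ∫⁻ s, ENNReal.ofReal (w t s) * g (φ t s) ∂μ = ∫⁻ s, g s ∂μ := by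
  have hcomp : AEMeasurable (fun s => g (φ t s)) μ :=
    hg.comp_quasiMeasurePreserving (h.quasiMeasurePreserving t)
  have hdensity : μ.withDensity ((μ.map (φ (-t))).rnDeriv μ) = μ.map (φ (-t)) :=
    Measure.withDensity_rnDeriv_eq _ _ (h.map_absolutelyContinuous (-t))
  have hcomp' : AEMeasurable (fun s => g (φ t s)) (μ.map (φ (-t))) :=
    hcomp.mono_ac (h.map_absolutelyContinuous (-t))
  calc ∫⁻ s, ENNReal.ofReal (w t s) * g (φ t s) ∂μ
      = ∫⁻ s, (μ.map (φ (-t))).rnDeriv μ s * g (φ t s) ∂μ :=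
        lintegral_congr_ae ((h.density_ae_eq t).mul .rfl)
    _ = ∫⁻ s, g (φ t s) ∂μ.map (φ (-t)) := by
        conv_rhs => rw [← hdensity]
        exact (lintegral_withDensity_eq_lintegral_mul₀
          (Measure.measurable_rnDeriv _ _).aemeasurable hcomp).symm
    _ = ∫⁻ s, g (φ t (φ (-t) s)) ∂μ :=
        lintegral_map' hcomp' (h.quasiMeasurePreserving (-t)).aemeasurable
    _ = ∫⁻ s, g s ∂μ := by simp only [← h.action_add, add_neg_cancel, h.action_zero]

theorem eLpNorm_rpow_density_mul_comp (h : IsRadonNikodymCocycle μ φ w) {p : ℝ≥0∞} (hp0 : p ≠ 0)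
    (hp : p ≠ ∞) (t : G) {f : S → ℝ} (hf : AEStronglyMeasurable f μ) :
    eLpNorm (fun s => w t s ^ p.toReal⁻¹ * f (φ t s)) p μ = eLpNorm f p μ := by
  rw [eLpNorm_eq_lintegral_rpow_enorm_toReal hp0 hp,
    eLpNorm_eq_lintegral_rpow_enorm_toReal hp0 hp,
    ← h.lintegral_density_mul_comp t (hf.enorm.pow_const _)]
  congr 2 with s
  have hw := Real.rpow_nonneg (h.density_pos t s).le p.toReal⁻¹
  rw [enorm_mul, ENNReal.mul_rpow_of_nonneg _ _ ENNReal.toReal_nonneg, Real.enorm_of_nonneg hw,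
    ENNReal.ofReal_rpow_of_nonneg hw ENNReal.toReal_nonneg,
    Real.rpow_inv_rpow (h.density_pos t s).le (ENNReal.toReal_ne_zero.2 ⟨hp0, hp⟩)]

theorem memLp_rpow_density_mul_comp (h : IsRadonNikodymCocycle μ φ w) {p : ℝ≥0∞} (hp0 : p ≠ 0)
    (hp : p ≠ ∞) (t : G) {f : S → ℝ} (hf : MemLp f p μ) :
    MemLp (fun s => w t s ^ p.toReal⁻¹ * f (φ t s)) p μ :=
  ⟨((h.measurable_density_right t).pow_const _).aestronglyMeasurable.mul
    (h.aestronglyMeasurable_comp t hf.1),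
    (h.eLpNorm_rpow_density_mul_comp hp0 hp t hf.1).trans_lt hf.2⟩

/-- The weighted Koopman operator `f ↦ w_t^{1/p} · (f ∘ φ_t)`, an isometry of `Lᵖ` for
`1 ≤ p < ∞`. -/
noncomputable def koopman (h : IsRadonNikodymCocycle μ φ w) {p : ℝ≥0∞} [hp1 : Fact (1 ≤ p)]
    (hp : p ≠ ∞) (t : G) : Lp ℝ p μ →ₗᵢ[ℝ] Lp ℝ p μ where
  toFun x := (h.memLp_rpow_density_mul_comp (one_pos.trans_le hp1.out).ne' hp t (Lp.memLp x)).toLp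
  map_add' x y := by
    rw [← MemLp.toLp_add, MemLp.toLp_eq_toLp_iff]
    filter_upwards [h.ae_eq_comp t (Lp.coeFn_add x y)] with s hs
    simp only [hs, Pi.add_apply, mul_add]
  map_smul' c x := by
    rw [RingHom.id_apply, ← MemLp.toLp_const_smul, MemLp.toLp_eq_toLp_iff]
    filter_upwards [h.ae_eq_comp t (Lp.coeFn_smul c x)] with s hs
    simp only [hs, Pi.smul_apply, smul_eq_mul, mul_left_comm]
  norm_map' x := by
    have hp0 : p ≠ 0 := (one_pos.trans_le hp1.out).ne'
    refine (Lp.norm_toLp _ (h.memLp_rpow_density_mul_comp hp0 hp t (Lp.memLp x))).trans ?_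
    rw [h.eLpNorm_rpow_density_mul_comp hp0 hp t (Lp.aestronglyMeasurable x), Lp.norm_def]

theorem coeFn_koopman (h : IsRadonNikodymCocycle μ φ w) {p : ℝ≥0∞} [hp1 : Fact (1 ≤ p)]
    (hp : p ≠ ∞) (t : G) (x : Lp ℝ p μ) :
    h.koopman hp t x =ᵐ[μ] fun s => w t s ^ p.toReal⁻¹ * x (φ t s) :=
  (h.memLp_rpow_density_mul_comp (one_pos.trans_le hp1.out).ne' hp t (Lp.memLp x)).coeFn_toLp

/-- The action `f ↦ w_t · (f ∘ φ_t)` on `L¹`. -/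
noncomputable abbrev koopmanL1 (h : IsRadonNikodymCocycle μ φ w) (t : G) :
    Lp ℝ 1 μ →ₗᵢ[ℝ] Lp ℝ 1 μ :=
  h.koopman ENNReal.one_ne_top t

/-- The action `f ↦ √w_t · (f ∘ φ_t)` on `L²`. -/
noncomputable abbrev koopmanL2 (h : IsRadonNikodymCocycle μ φ w) (t : G) :
    Lp ℝ 2 μ →ₗᵢ[ℝ] Lp ℝ 2 μ :=
  h.koopman ENNReal.ofNat_ne_top t

theorem coeFn_koopmanL1 (h : IsRadonNikodymCocycle μ φ w) (t : G) (x : Lp ℝ 1 μ) :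
    h.koopmanL1 t x =ᵐ[μ] fun s => w t s * x (φ t s) := by
  simpa using h.coeFn_koopman ENNReal.one_ne_top t x

theorem coeFn_koopmanL2 (h : IsRadonNikodymCocycle μ φ w) (t : G) (x : Lp ℝ 2 μ) :
    h.koopmanL2 t x =ᵐ[μ] fun s => √(w t s) * x (φ t s) := by
  simpa [Real.sqrt_eq_rpow] using h.coeFn_koopman ENNReal.ofNat_ne_top t x

theorem koopmanL2_sqrtLp (h : IsRadonNikodymCocycle μ φ w) (t : G) (x : Lp ℝ 1 μ) :
    h.koopmanL2 t (sqrtLp x) = sqrtLp (h.koopmanL1 t x) := by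
  refine Lp.ext ?_
  filter_upwards [h.coeFn_koopmanL2 t (sqrtLp x), h.ae_eq_comp t (coeFn_sqrtLp x),
    coeFn_sqrtLp (h.koopmanL1 t x), h.coeFn_koopmanL1 t x] with s hleft hsqrt hright hkoopman
  rw [hleft, hsqrt, hright, hkoopman, Real.sqrt_mul (h.density_pos t s).le]

theorem koopmanL1_mulLp (h : IsRadonNikodymCocycle μ φ w) (t : G) (v k : Lp ℝ 2 μ) :
    h.koopmanL1 t (mulLp v k) = mulLp (h.koopmanL2 t v) (h.koopmanL2 t k) := by
  refine Lp.ext ?_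
  filter_upwards [h.coeFn_koopmanL1 t (mulLp v k), h.ae_eq_comp t (coeFn_mulLp v k),
    coeFn_mulLp (h.koopmanL2 t v) (h.koopmanL2 t k), h.coeFn_koopmanL2 t v, h.coeFn_koopmanL2 t k]
    with s hleft hmul hright hv hk
  rw [hleft, hmul, hright, hv, hk, mul_mul_mul_comm, Real.mul_self_sqrt (h.density_pos t s).le]

end Koopman

section KoopmanIntegral

variable {G S : Type*} [AddGroup G] [MeasurableSpace G] [MeasurableSpace S] {μ : Measure S}
  [SigmaFinite μ] {φ : G → S → S} {w : G → S → ℝ}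

theorem quasiMeasurePreserving_prod (h : IsRadonNikodymCocycle μ φ w) (κ : Measure G) [SFinite κ] :
    Measure.QuasiMeasurePreserving (fun p : S × G => φ p.2 p.1) (μ.prod κ) μ := by
  have hm : Measurable fun p : S × G => φ p.2 p.1 := h.measurable_action.comp measurable_swap
  refine ⟨hm, Measure.AbsolutelyContinuous.mk fun N hN hμN => ?_⟩
  rw [Measure.map_apply hm hN, Measure.prod_apply_symm (hm hN)]
  exact lintegral_eq_zero_of_ae_eq_zero
    (.of_forall fun t => (h.quasiMeasurePreserving t).preimage_null hμN)

theorem ae_ae_eq_comp {β : Type*} (h : IsRadonNikodymCocycle μ φ w) (κ : Measure G) [SFinite κ]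
    {f g : S → β} (hfg : f =ᵐ[μ] g) : ∀ᵐ s ∂μ, ∀ᵐ t ∂κ, f (φ t s) = g (φ t s) :=
  Measure.ae_ae_of_ae_prod ((h.quasiMeasurePreserving_prod κ).ae_eq_comp hfg)

theorem integrable_density_mul_comp (h : IsRadonNikodymCocycle μ φ w) (t : G) {f : S → ℝ}
    (hf : Integrable f μ) : Integrable (fun s => w t s * f (φ t s)) μ := by
  simpa using memLp_one_iff_integrable.1 (h.memLp_rpow_density_mul_comp one_ne_zero
    ENNReal.one_ne_top t (memLp_one_iff_integrable.2 hf))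

theorem integral_norm_density_mul_comp (h : IsRadonNikodymCocycle μ φ w) (t : G) {f : S → ℝ}
    (hf : AEStronglyMeasurable f μ) : ∫ s, ‖w t s * f (φ t s)‖ ∂μ = ∫ s, ‖f s‖ ∂μ := by
  have hm : AEStronglyMeasurable (fun s => w t s * f (φ t s)) μ :=
    (h.measurable_density_right t).aestronglyMeasurable.mul (h.aestronglyMeasurable_comp t hf)
  rw [integral_norm_eq_lintegral_enorm hm, integral_norm_eq_lintegral_enorm hf,
    ← eLpNorm_one_eq_lintegral_enorm, ← eLpNorm_one_eq_lintegral_enorm,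
    ← h.eLpNorm_rpow_density_mul_comp one_ne_zero ENNReal.one_ne_top t hf]
  simp

theorem integrable_prod_density_mul_comp (h : IsRadonNikodymCocycle μ φ w) (κ : Measure G)
    [IsFiniteMeasure κ] {f : S → ℝ} (hf : Integrable f μ) :
    Integrable (fun p : S × G => w p.2 p.1 * f (φ p.2 p.1)) (μ.prod κ) := by
  have hm : AEStronglyMeasurable (fun p : S × G => w p.2 p.1 * f (φ p.2 p.1)) (μ.prod κ) :=
    (h.measurable_density.comp measurable_swap).aestronglyMeasurable.mul
      (hf.aestronglyMeasurable.comp_quasiMeasurePreserving (h.quasiMeasurePreserving_prod κ))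
  refine (integrable_prod_iff' hm).2
    ⟨.of_forall fun t => h.integrable_density_mul_comp t hf, ?_⟩
  simp only [h.integral_norm_density_mul_comp _ hf.aestronglyMeasurable]
  exact integrable_const _

theorem integral_norm_integral_density_mul_comp_le (h : IsRadonNikodymCocycle μ φ w)
    (κ : Measure G) [IsFiniteMeasure κ] {f : S → ℝ} (hf : Integrable f μ) :
    ∫ s, ‖∫ t, w t s * f (φ t s) ∂κ‖ ∂μ ≤ κ.real Set.univ * ∫ s, ‖f s‖ ∂μ := by
  have hint := h.integrable_prod_density_mul_comp κ hf
  calc ∫ s, ‖∫ t, w t s * f (φ t s) ∂κ‖ ∂μ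
      ≤ ∫ s, ∫ t, ‖w t s * f (φ t s)‖ ∂κ ∂μ :=
        integral_mono hint.integral_prod_left.norm hint.norm.integral_prod_left
          fun s => norm_integral_le_integral_norm _
    _ = ∫ t, ∫ s, ‖w t s * f (φ t s)‖ ∂μ ∂κ := integral_integral_swap hint.norm
    _ = κ.real Set.univ * ∫ s, ‖f s‖ ∂μ := by
        simp only [h.integral_norm_density_mul_comp _ hf.aestronglyMeasurable, integral_const,
          smul_eq_mul]

/-- The operator `x ↦ ∫ U_t x dκ(t)` on `L¹`, where `U = h.koopmanL1`. The integral is taken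
pointwise in `S`, so that no measurability of `t ↦ U_t x` in `L¹` is involved. -/
noncomputable def koopmanIntegral (h : IsRadonNikodymCocycle μ φ w) (κ : Measure G)
    [IsFiniteMeasure κ] : Lp ℝ 1 μ →L[ℝ] Lp ℝ 1 μ :=
  LinearMap.mkContinuous
    { toFun x :=
        (h.integrable_prod_density_mul_comp κ (L1.integrable_coeFn x)).integral_prod_left.toL1
      map_add' x y := by
        have hx := h.integrable_prod_density_mul_comp κ (L1.integrable_coeFn x)
        have hy := h.integrable_prod_density_mul_comp κ (L1.integrable_coeFn y)
        rw [← Integrable.toL1_add, Integrable.toL1_eq_toL1_iff]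
        filter_upwards [h.ae_ae_eq_comp κ (Lp.coeFn_add x y), hx.prod_right_ae, hy.prod_right_ae]
          with s hs hxs hys
        rw [Pi.add_apply, ← integral_add hxs hys]
        refine integral_congr_ae ?_
        filter_upwards [hs] with t ht
        rw [ht, Pi.add_apply, mul_add]
      map_smul' c x := by
        rw [RingHom.id_apply, ← Integrable.toL1_smul, Integrable.toL1_eq_toL1_iff]
        filter_upwards [h.ae_ae_eq_comp κ (Lp.coeFn_smul c x)] with s hs
        rw [← integral_smul]
        refine integral_congr_ae ?_
        filter_upwards [hs] with t ht
        rw [ht, Pi.smul_apply, smul_eq_mul, smul_eq_mul, mul_left_comm] }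
    (κ.real Set.univ) fun x => by
      have hx := L1.integrable_coeFn x
      rw [L1.norm_eq_integral_norm x]
      exact (L1.norm_of_fun_eq_integral_norm
        (h.integrable_prod_density_mul_comp κ hx).integral_prod_left).trans_le
        (h.integral_norm_integral_density_mul_comp_le κ hx)

theorem coeFn_koopmanIntegral (h : IsRadonNikodymCocycle μ φ w) (κ : Measure G)
    [IsFiniteMeasure κ] (x : Lp ℝ 1 μ) :
    h.koopmanIntegral κ x =ᵐ[μ] fun s => ∫ t, w t s * x (φ t s) ∂κ :=
  (h.integrable_prod_density_mul_comp κ (L1.integrable_coeFn x)).integral_prod_left.coeFn_toL1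

theorem coeFn_koopmanIntegral_of_ae_eq (h : IsRadonNikodymCocycle μ φ w) (κ : Measure G)
    [IsFiniteMeasure κ] {x : Lp ℝ 1 μ} {f : S → ℝ} (hf : x =ᵐ[μ] f) :
    h.koopmanIntegral κ x =ᵐ[μ] fun s => ∫ t, w t s * f (φ t s) ∂κ := by
  filter_upwards [h.coeFn_koopmanIntegral κ x, h.ae_ae_eq_comp κ hf] with s hs hfs
  rw [hs]
  refine integral_congr_ae ?_
  filter_upwards [hfs] with t ht
  rw [ht]

theorem norm_koopmanIntegral_le (h : IsRadonNikodymCocycle μ φ w) (κ : Measure G)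
    [IsFiniteMeasure κ] : ‖h.koopmanIntegral κ‖ ≤ κ.real Set.univ :=
  LinearMap.mkContinuous_norm_le _ measureReal_nonneg _

theorem koopmanIntegral_add_measure (h : IsRadonNikodymCocycle μ φ w) (κ₁ κ₂ : Measure G)
    [IsFiniteMeasure κ₁] [IsFiniteMeasure κ₂] :
    h.koopmanIntegral (κ₁ + κ₂) = h.koopmanIntegral κ₁ + h.koopmanIntegral κ₂ := by
  ext1 x
  refine Lp.ext ?_
  filter_upwards [h.coeFn_koopmanIntegral (κ₁ + κ₂) x, h.coeFn_koopmanIntegral κ₁ x,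
    h.coeFn_koopmanIntegral κ₂ x, Lp.coeFn_add (h.koopmanIntegral κ₁ x) (h.koopmanIntegral κ₂ x),
    (h.integrable_prod_density_mul_comp κ₁ (L1.integrable_coeFn x)).prod_right_ae,
    (h.integrable_prod_density_mul_comp κ₂ (L1.integrable_coeFn x)).prod_right_ae]
    with s hsum h₁ h₂ hadd hint₁ hint₂
  rw [hsum, add_apply, hadd, Pi.add_apply, h₁, h₂,
    integral_add_measure hint₁ hint₂]

theorem norm_koopmanIntegral_sub_le (h : IsRadonNikodymCocycle μ φ w) {κ₁ κ₂ : Measure G}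
    [IsFiniteMeasure κ₁] [IsFiniteMeasure κ₂] {E : Set G} (hE : MeasurableSet E)
    (hκ : κ₁.restrict E = κ₂.restrict E) :
    ‖h.koopmanIntegral κ₁ - h.koopmanIntegral κ₂‖ ≤ κ₁.real Eᶜ + κ₂.real Eᶜ := by
  have hsplit (κ : Measure G) [IsFiniteMeasure κ] : h.koopmanIntegral κ =
      h.koopmanIntegral (κ.restrict E) + h.koopmanIntegral (κ.restrict Eᶜ) := by
    simp only [← h.koopmanIntegral_add_measure, Measure.restrict_add_restrict_compl hE]
  have hnorm (κ : Measure G) [IsFiniteMeasure κ] :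
      ‖h.koopmanIntegral (κ.restrict Eᶜ)‖ ≤ κ.real Eᶜ := by
    simpa using h.norm_koopmanIntegral_le (κ.restrict Eᶜ)
  rw [hsplit κ₁, hsplit κ₂]
  simp only [hκ, add_sub_add_left_eq_sub]
  exact (norm_sub_le _ _).trans (add_le_add (hnorm κ₁) (hnorm κ₂))

theorem koopmanIntegral_koopmanL1 [MeasurableAdd G] (h : IsRadonNikodymCocycle μ φ w)
    (κ : Measure G) [IsFiniteMeasure κ] (u : G) (x : Lp ℝ 1 μ) :
    h.koopmanIntegral κ (h.koopmanL1 u x) = h.koopmanIntegral (κ.map (u + ·)) x := by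
  refine Lp.ext ?_
  filter_upwards [h.coeFn_koopmanIntegral_of_ae_eq κ (h.coeFn_koopmanL1 u x),
    h.coeFn_koopmanIntegral (κ.map (u + ·)) x] with s hleft hright
  rw [hleft, hright, (measurableEmbedding_addLeft u).integral_map]
  simp only [h.density_add, h.action_add, mul_assoc]

theorem koopmanIntegral_eq_of_koopmanL1_eq (h : IsRadonNikodymCocycle μ φ w) (κ : Measure G)
    [IsProbabilityMeasure κ] {x : Lp ℝ 1 μ} (hx : ∀ t, h.koopmanL1 t x = x) :
    h.koopmanIntegral κ x = x := by
  have hfixed : ∀ᵐ s ∂μ, ∀ᵐ t ∂κ, w t s * x (φ t s) = x s := by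
    have hxm := (Lp.stronglyMeasurable x).measurable
    refine (Measure.ae_ae_comm ?_).1 (.of_forall fun t => ?_)
    · exact measurableSet_eq_fun (h.measurable_density.mul (hxm.comp h.measurable_action))
        (hxm.comp measurable_snd)
    · filter_upwards [h.coeFn_koopmanL1 t x] with s hs
      rw [← hs, hx]
  refine Lp.ext ?_
  filter_upwards [h.coeFn_koopmanIntegral κ x, hfixed] with s hs hfs
  simp [hs, integral_congr_ae hfs]

end KoopmanIntegral

section Commutative

variable {G S : Type*} [AddCommGroup G] [MeasurableSpace G] [MeasurableSpace S] {μ : Measure S}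
  [SigmaFinite μ] {φ : G → S → S} {w : G → S → ℝ}

theorem koopmanL1_koopmanIntegral (h : IsRadonNikodymCocycle μ φ w) (κ : Measure G)
    [IsFiniteMeasure κ] (u : G) (x : Lp ℝ 1 μ) :
    h.koopmanL1 u (h.koopmanIntegral κ x) = h.koopmanIntegral κ (h.koopmanL1 u x) := by
  refine Lp.ext ?_
  filter_upwards [h.coeFn_koopmanL1 u (h.koopmanIntegral κ x),
    h.ae_eq_comp u (h.coeFn_koopmanIntegral κ x),
    h.coeFn_koopmanIntegral_of_ae_eq κ (h.coeFn_koopmanL1 u x)] with s hleft hint hright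
  rw [hleft, hint, hright, ← integral_const_mul]
  simp only [← mul_assoc, ← h.density_add, ← h.action_add, add_comm u]

end Commutative

section FoelnerAverages

variable {ι G S : Type*} [AddGroup G] [MeasurableSpace G] [MeasurableSpace S] {μ : Measure S}
  [SigmaFinite μ] {φ : G → S → S} {w : G → S → ℝ} {ν : Measure G} {l : Filter ι} {D : ι → Set G}

theorem norm_koopmanIntegral_cond_le (h : IsRadonNikodymCocycle μ φ w) (ν : Measure G)
    (D : Set G) : ‖h.koopmanIntegral ν[|D]‖ ≤ 1 :=
  (h.norm_koopmanIntegral_le _).trans measureReal_le_one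

theorem norm_koopmanIntegral_cond_sub_le (h : IsRadonNikodymCocycle μ φ w) {D D' : Set G}
    (hD : MeasurableSet D) (hD' : MeasurableSet D') (hν : ν D' = ν D) (hν0 : ν D ≠ 0)
    (hνD : ν D ≠ ∞) :
    ‖h.koopmanIntegral ν[|D'] - h.koopmanIntegral ν[|D]‖ ≤ 2 * (ν (D' ∆ D) / ν D).toReal := by
  have hrestrict : ν[|D'].restrict (D' ∩ D) = ν[|D].restrict (D' ∩ D) := by
    rw [ProbabilityTheory.cond, ProbabilityTheory.cond, Measure.restrict_smul,
      Measure.restrict_smul, hν, Measure.restrict_restrict_of_subset Set.inter_subset_left,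
      Measure.restrict_restrict_of_subset Set.inter_subset_right]
  have hcompl : ∀ E, MeasurableSet E → ν E = ν D → E ∩ (D' ∩ D)ᶜ ⊆ D' ∆ D →
      ν[|E].real (D' ∩ D)ᶜ ≤ (ν (D' ∆ D) / ν D).toReal := fun E hE hνE hsubset => by
    rw [Measure.real, cond_apply hE, hνE, mul_comm, ← div_eq_mul_inv]
    have : ν (D' ∆ D) ≠ ∞ := by
      refine ((measure_mono Set.symmDiff_subset_union).trans_lt (measure_union_lt_top ?_ ?_)).ne
      exacts [(hν.trans_ne hνD).lt_top, hνD.lt_top]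
    exact ENNReal.toReal_mono (ENNReal.div_ne_top this hν0)
      (ENNReal.div_le_div_right (measure_mono hsubset) _)
  refine (h.norm_koopmanIntegral_sub_le (hD'.inter hD) hrestrict).trans ?_
  rw [two_mul]
  refine add_le_add (hcompl D' hD' hν ?_) (hcompl D hD rfl ?_) <;>
  · intro t
    simp only [Set.mem_inter_iff, Set.mem_compl_iff, Set.mem_symmDiff]
    tauto

theorem tendsto_koopmanIntegral_koopmanL1_sub [MeasurableAdd G] [ν.IsAddLeftInvariant]
    (h : IsRadonNikodymCocycle μ φ w) (hD : IsAddFoelner G ν l D) (u : G) (x : Lp ℝ 1 μ) :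
    Tendsto (fun i => h.koopmanIntegral ν[|D i] (h.koopmanL1 u x - x)) l (𝓝 0) := by
  have hratio : Tendsto (fun i => 2 * (ν ((u +ᵥ D i) ∆ D i) / ν (D i)).toReal * ‖x‖) l (𝓝 0) := by
    simpa using (((ENNReal.tendsto_toReal ENNReal.zero_ne_top).comp
      (hD.tendsto_meas_vadd_symmDiff u)).const_mul 2).mul_const ‖x‖
  refine squeeze_zero_norm' ?_ hratio
  filter_upwards [hD.eventually_measurableSet, hD.eventually_meas_ne_zero,
    hD.eventually_meas_ne_top] with i hi hi0 hi'
  have hshift : h.koopmanIntegral ν[|D i] (h.koopmanL1 u x) =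
      h.koopmanIntegral ν[|u +ᵥ D i] x := by
    simp only [h.koopmanIntegral_koopmanL1, map_add_left_cond]
  rw [map_sub, hshift, ← sub_apply]
  exact ContinuousLinearMap.le_of_opNorm_le _
    (h.norm_koopmanIntegral_cond_sub_le hi (hi.const_vadd u) (measure_vadd ν u _) hi0 hi') x

theorem tendsto_koopmanIntegral_of_koopmanL1_eq (h : IsRadonNikodymCocycle μ φ w)
    (hD : IsAddFoelner G ν l D) {x : Lp ℝ 1 μ} (hx : ∀ t, h.koopmanL1 t x = x) :
    Tendsto (fun i => h.koopmanIntegral ν[|D i] x) l (𝓝 x) := by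
  refine tendsto_const_nhds.congr' ?_
  filter_upwards [hD.eventually_meas_ne_zero, hD.eventually_meas_ne_top] with i hi0 hi
  have := cond_isProbabilityMeasure_of_finite hi0 hi
  exact (h.koopmanIntegral_eq_of_koopmanL1_eq ν[|D i] hx).symm

theorem tendsto_koopmanIntegral_mulLp [MeasurableAdd G] [ν.IsAddLeftInvariant]
    (h : IsRadonNikodymCocycle μ φ w) (hD : IsAddFoelner G ν l D) {v : Lp ℝ 2 μ}
    (hv : v ∈ fixedSubspace h.koopmanL2) (k : Lp ℝ 2 μ) :
    Tendsto (fun i => h.koopmanIntegral ν[|D i] (mulLp v k)) l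
      (𝓝 (mulLp v ((fixedSubspace h.koopmanL2).starProjection k))) := by
  set W := fixedSubspace h.koopmanL2
  have hmul : ∀ t q, h.koopmanL1 t (mulLp v q) = mulLp v (h.koopmanL2 t q) := fun t q => by
    rw [h.koopmanL1_mulLp, mem_fixedSubspace.1 hv t]
  have hprojection : Tendsto (fun i => h.koopmanIntegral ν[|D i] (mulLp v (W.starProjection k))) l
      (𝓝 (mulLp v (W.starProjection k))) :=
    h.tendsto_koopmanIntegral_of_koopmanL1_eq hD fun t => by
      rw [hmul, mem_fixedSubspace.1 (W.starProjection_apply_mem k) t]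
  have horthogonal : Tendsto
      (fun i => h.koopmanIntegral ν[|D i] (mulLp v (k - W.starProjection k))) l (𝓝 0) := by
    refine tendsto_zero_of_mem_orthogonal_fixedSubspace h.koopmanL2
      (fun i => (h.koopmanIntegral ν[|D i]).comp (mulLp v)) (c := ‖mulLp v‖) (fun i => ?_)
      (fun t q => ?_) (W.sub_starProjection_mem_orthogonal k)
    · refine (ContinuousLinearMap.opNorm_comp_le _ _).trans ?_
      exact mul_le_of_le_one_left (norm_nonneg _) (h.norm_koopmanIntegral_cond_le ν _)
    · simpa only [ContinuousLinearMap.comp_apply, map_sub, hmul]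
        using h.tendsto_koopmanIntegral_koopmanL1_sub hD t (mulLp v q)
  simpa [← map_add] using hprojection.add horthogonal

theorem exists_tendsto_koopmanIntegral [MeasurableAdd G] [ν.IsAddLeftInvariant] [l.NeBot]
    (h : IsRadonNikodymCocycle μ φ w) (hD : IsAddFoelner G ν l D) {v : Lp ℝ 2 μ}
    (hv : v ∈ fixedSubspace h.koopmanL2) {x : Lp ℝ 1 μ} (hx : ∀ᵐ s ∂μ, v s = 0 → x s = 0) :
    ∃ y, Tendsto (fun i => h.koopmanIntegral ν[|D i] x) l (𝓝 y) := by
  have hequicontinuous : Equicontinuous fun i x => h.koopmanIntegral ν[|D i] x :=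
    equicontinuous_of_norm_le _ fun i => h.norm_koopmanIntegral_cond_le ν (D i)
  refine exists_tendsto_of_mem_closure hequicontinuous ?_ (mem_closure_range_mulLp hx)
  rintro _ ⟨k, rfl⟩
  exact ⟨_, h.tendsto_koopmanIntegral_mulLp hD hv k⟩

end FoelnerAverages

section FixedVectors

variable {G S : Type*} [AddGroup G] [MeasurableSpace G] [MeasurableSpace S] {μ : Measure S}
  [SigmaFinite μ] {φ : G → S → S} {w : G → S → ℝ}

theorem ae_sqrt_density_mul_comp_eq (h : IsRadonNikodymCocycle μ φ w) {v : Lp ℝ 2 μ}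
    (hv : v ∈ fixedSubspace h.koopmanL2) (t : G) :
    ∀ᵐ s ∂μ, √(w t s) * v (φ t s) = v s := by
  filter_upwards [h.coeFn_koopmanL2 t v] with s hs
  rw [← hs, mem_fixedSubspace.1 hv t]

theorem exists_mem_fixedSubspace_ae_eq_indicator_abs (h : IsRadonNikodymCocycle μ φ w)
    {v q : Lp ℝ 2 μ} (hv : v ∈ fixedSubspace h.koopmanL2) (hq : q ∈ fixedSubspace h.koopmanL2) :
    ∃ r ∈ fixedSubspace h.koopmanL2, r =ᵐ[μ] {s | v s = 0}.indicator fun s => |q s| := by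
  have hZ : MeasurableSet {s | v s = 0} :=
    (Lp.stronglyMeasurable v).measurable (measurableSet_singleton 0)
  have hr := (Lp.memLp q).abs.indicator hZ
  refine ⟨hr.toLp, mem_fixedSubspace.2 fun t => Lp.ext ?_, hr.coeFn_toLp⟩
  filter_upwards [h.coeFn_koopmanL2 t hr.toLp, hr.coeFn_toLp, h.ae_eq_comp t hr.coeFn_toLp,
    h.ae_sqrt_density_mul_comp_eq hv t, h.ae_sqrt_density_mul_comp_eq hq t]
    with s hkoopman hrs hrφ hvs hqs
  have hw : 0 < √(w t s) := Real.sqrt_pos.2 (h.density_pos t s)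
  rw [hkoopman, hrs, hrφ]
  by_cases hzero : v (φ t s) = 0 <;>
    simp [Set.indicator, ← hvs, ← hqs, hzero, abs_mul, abs_of_pos hw, hw.ne']

theorem exists_mem_fixedSubspace_forall_ae_eq_zero (h : IsRadonNikodymCocycle μ φ w) :
    ∃ v ∈ fixedSubspace h.koopmanL2,
      ∀ q ∈ fixedSubspace h.koopmanL2, ∀ᵐ s ∂μ, v s = 0 → q s = 0 := by
  obtain ⟨p, hp⟩ := exists_Lp_two_pos μ
  set W := fixedSubspace h.koopmanL2
  refine ⟨W.starProjection p, W.starProjection_apply_mem p, fun q hq => ?_⟩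
  obtain ⟨r, hrW, hr⟩ :=
    h.exists_mem_fixedSubspace_ae_eq_indicator_abs (W.starProjection_apply_mem p) hq
  have hinner : inner ℝ r p = 0 := by
    rw [← W.starProjection_eq_self_iff.2 hrW, W.inner_starProjection_left_eq_right, L2.inner_def]
    refine integral_eq_zero_of_ae ?_
    filter_upwards [hr] with s hs
    by_cases hzero : W.starProjection p s = 0 <;> simp [hs, hzero]
  have hnonneg : ∀ᵐ s ∂μ, 0 ≤ r s := by
    filter_upwards [hr] with s hs
    rw [hs]
    exact Set.indicator_nonneg (fun _ _ => abs_nonneg _) s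
  filter_upwards [hr, ae_eq_zero_of_inner_eq_zero hnonneg hp hinner] with s hrs hzero hvs
  simpa [hzero, hvs] using hrs.symm

theorem ae_koopmanIntegral_eq_zero (h : IsRadonNikodymCocycle μ φ w) (κ : Measure G)
    [IsFiniteMeasure κ] {v : Lp ℝ 2 μ} (hv : v ∈ fixedSubspace h.koopmanL2) {x : Lp ℝ 1 μ}
    (hx : ∀ᵐ s ∂μ, v s ≠ 0 → x s = 0) : ∀ᵐ s ∂μ, v s ≠ 0 → h.koopmanIntegral κ x s = 0 := by
  have hvm := (Lp.stronglyMeasurable v).measurable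
  have hxm := (Lp.stronglyMeasurable x).measurable
  have horbit : ∀ᵐ s ∂μ, ∀ᵐ t ∂κ, v s ≠ 0 → x (φ t s) = 0 := by
    refine (Measure.ae_ae_comm ?_).1 (.of_forall fun t => ?_)
    · exact ((hvm.comp measurable_snd) (measurableSet_singleton 0).compl).imp
        ((hxm.comp h.measurable_action) (measurableSet_singleton 0))
    · filter_upwards [h.ae_sqrt_density_mul_comp_eq hv t, (h.quasiMeasurePreserving t).ae hx]
        with s hvs hxs hs
      exact hxs (right_ne_zero_of_mul (hvs.trans_ne hs))
  filter_upwards [h.coeFn_koopmanIntegral κ x, horbit] with s hs hxs hvs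
  rw [hs]
  refine integral_eq_zero_of_ae ?_
  filter_upwards [hxs] with t ht
  simp [ht hvs]

theorem abs_koopmanIntegral_le (h : IsRadonNikodymCocycle μ φ w) (κ : Measure G)
    [IsFiniteMeasure κ] (x : Lp ℝ 1 μ) :
    ∀ᵐ s ∂μ, |h.koopmanIntegral κ x s| ≤ h.koopmanIntegral κ |x| s := by
  filter_upwards [h.coeFn_koopmanIntegral κ x,
    h.coeFn_koopmanIntegral_of_ae_eq κ (Lp.coeFn_abs x)] with s hx habs
  rw [hx, habs]
  refine abs_integral_le_integral_abs.trans_eq (integral_congr_ae (.of_forall fun t => ?_))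
  simp only [abs_mul, abs_of_pos (h.density_pos t s)]

end FixedVectors

section StochasticErgodicTheorem

variable {ι G S : Type*} [AddCommGroup G] [MeasurableSpace G] [MeasurableAdd G]
  [MeasurableSpace S] {μ : Measure S} [SigmaFinite μ] {φ : G → S → S} {w : G → S → ℝ}
  {ν : Measure G} [ν.IsAddLeftInvariant] {l : Filter ι} {D : ι → Set G}

theorem tendsto_koopmanL1_koopmanIntegral_sub (h : IsRadonNikodymCocycle μ φ w)
    (hD : IsAddFoelner G ν l D) (u : G) (x : Lp ℝ 1 μ) :
    Tendsto (fun i => h.koopmanL1 u (h.koopmanIntegral ν[|D i] x) - h.koopmanIntegral ν[|D i] x)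
      l (𝓝 0) := by
  simpa only [map_sub, h.koopmanL1_koopmanIntegral]
    using h.tendsto_koopmanIntegral_koopmanL1_sub hD u x

theorem koopmanL1_eq_of_tendsto_koopmanIntegral [l.NeBot] (h : IsRadonNikodymCocycle μ φ w)
    (hD : IsAddFoelner G ν l D) {x y : Lp ℝ 1 μ}
    (hxy : Tendsto (fun i => h.koopmanIntegral ν[|D i] x) l (𝓝 y)) (t : G) :
    h.koopmanL1 t y = y :=
  sub_eq_zero.1 (tendsto_nhds_unique
    ((((h.koopmanL1 t).continuous.tendsto y).comp hxy).sub hxy)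
    (h.tendsto_koopmanL1_koopmanIntegral_sub hD t x))

theorem tendsto_koopmanL2_sqrtLp_koopmanIntegral_sub (h : IsRadonNikodymCocycle μ φ w)
    (hD : IsAddFoelner G ν l D) (u : G) (x : Lp ℝ 1 μ) :
    Tendsto (fun i => h.koopmanL2 u (sqrtLp (h.koopmanIntegral ν[|D i] x)) -
      sqrtLp (h.koopmanIntegral ν[|D i] x)) l (𝓝 0) := by
  refine squeeze_zero_norm (fun i => Real.le_sqrt_of_sq_le ?_)
    (by simpa using (h.tendsto_koopmanL1_koopmanIntegral_sub hD u x).norm.sqrt)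
  rw [h.koopmanL2_sqrtLp]
  exact norm_sqrtLp_sub_sq_le _ _

theorem tendsto_setIntegral_sqrt_koopmanIntegral (h : IsRadonNikodymCocycle μ φ w)
    (hD : IsAddFoelner G ν l D) {B : Set S} (hB : MeasurableSet B) (hμB : μ B ≠ ∞)
    (hfixed : ∀ q ∈ fixedSubspace h.koopmanL2, ∀ᵐ s ∂μ, s ∈ B → q s = 0) (x : Lp ℝ 1 μ) :
    Tendsto (fun i => ∫ s in B, √(h.koopmanIntegral ν[|D i] x s) ∂μ) l (𝓝 0) := by
  have hbound : ∀ i, ‖sqrtLp (h.koopmanIntegral ν[|D i] x)‖ ≤ √‖x‖ := fun i =>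
    Real.le_sqrt_of_sq_le ((norm_sqrtLp_sq_le _).trans
      (by simpa using ContinuousLinearMap.le_of_opNorm_le _ (h.norm_koopmanIntegral_cond_le ν _) x))
  have hinner := tendsto_inner_of_mem_orthogonal_fixedSubspace h.koopmanL2 hbound
    (fun u => h.tendsto_koopmanL2_sqrtLp_koopmanIntegral_sub hD u x)
    (indicatorConstLp_mem_orthogonal hB hμB hfixed)
  refine hinner.congr fun i => ?_
  rw [real_inner_comm, L2.inner_indicatorConstLp_one]
  exact integral_congr_ae (ae_restrict_of_ae (coeFn_sqrtLp _))

theorem tendstoLocallyInMeasure_koopmanIntegral_zero (h : IsRadonNikodymCocycle μ φ w)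
    (hD : IsAddFoelner G ν l D) {v : Lp ℝ 2 μ} (hv : v ∈ fixedSubspace h.koopmanL2)
    (hmax : ∀ q ∈ fixedSubspace h.koopmanL2, ∀ᵐ s ∂μ, v s = 0 → q s = 0) {x : Lp ℝ 1 μ}
    (hx : ∀ᵐ s ∂μ, v s ≠ 0 → x s = 0) :
    TendstoLocallyInMeasure μ (fun i => h.koopmanIntegral ν[|D i] x) l 0 := by
  intro B hB hμB
  set Z := {s | v s = 0}
  have hZ : MeasurableSet Z := (Lp.stronglyMeasurable v).measurable (measurableSet_singleton 0)
  have : IsFiniteMeasure (μ.restrict B) := ⟨by simpa using hμB⟩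
  refine tendstoInMeasure_zero_of_tendsto_integral_sqrt
    (g := fun i => Z.indicator (h.koopmanIntegral ν[|D i] |x|)) (fun i => ae_restrict_of_ae ?_)
    (fun i => ?_) ?_
  · filter_upwards [h.abs_koopmanIntegral_le ν[|D i] x, h.ae_koopmanIntegral_eq_zero ν[|D i] hv hx]
      with s habs hzero
    by_cases hs : v s = 0
    · simpa [Z, hs] using habs
    · simp [Z, hs, hzero hs]
  · exact ((memLp_two_sqrt ((L1.integrable_coeFn _).indicator hZ)).restrict B).integrable
      one_le_two
  · have hsqrt : ∀ i s, √(Z.indicator (h.koopmanIntegral ν[|D i] |x|) s) =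
        Z.indicator (fun s => √(h.koopmanIntegral ν[|D i] |x| s)) s := fun i s => by
      by_cases hs : s ∈ Z <;> simp [hs]
    simp only [hsqrt, setIntegral_indicator hZ]
    refine h.tendsto_setIntegral_sqrt_koopmanIntegral hD (hB.inter hZ)
      (measure_inter_ne_top_of_left_ne_top hμB.ne) (fun q hq => ?_) |x|
    filter_upwards [hmax q hq] with s hs hsB using hs hsB.2

theorem exists_tendstoLocallyInMeasure_koopmanIntegral [l.NeBot]
    (h : IsRadonNikodymCocycle μ φ w) (hD : IsAddFoelner G ν l D) (x : Lp ℝ 1 μ) :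
    ∃ y : Lp ℝ 1 μ, (∀ t, h.koopmanL1 t y = y) ∧
      TendstoLocallyInMeasure μ (fun i => h.koopmanIntegral ν[|D i] x) l y := by
  obtain ⟨v, hv, hmax⟩ := h.exists_mem_fixedSubspace_forall_ae_eq_zero
  have hZ : MeasurableSet {s | v s = 0} :=
    (Lp.stronglyMeasurable v).measurable (measurableSet_singleton 0)
  obtain ⟨xpos, hxpos⟩ : ∃ x' : Lp ℝ 1 μ, x' =ᵐ[μ] {s | v s = 0}ᶜ.indicator x :=
    ⟨_, ((Lp.memLp x).indicator hZ.compl).coeFn_toLp⟩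
  obtain ⟨xnull, hxnull⟩ : ∃ x' : Lp ℝ 1 μ, x' =ᵐ[μ] {s | v s = 0}.indicator x :=
    ⟨_, ((Lp.memLp x).indicator hZ).coeFn_toLp⟩
  have hsplit : x = xpos + xnull := by
    refine Lp.ext ?_
    filter_upwards [Lp.coeFn_add xpos xnull, hxpos, hxnull] with s hadd hpos hnull
    rw [hadd, Pi.add_apply, hpos, hnull, Set.indicator_compl_add_self_apply]
  obtain ⟨y, hy⟩ := h.exists_tendsto_koopmanIntegral hD hv (x := xpos) (by
    filter_upwards [hxpos] with s hs hvs
    simp [hs, hvs])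
  have hnull := h.tendstoLocallyInMeasure_koopmanIntegral_zero hD hv hmax (x := xnull) (by
    filter_upwards [hxnull] with s hs hvs
    simp [hs, hvs])
  refine ⟨y, h.koopmanL1_eq_of_tendsto_koopmanIntegral hD hy,
    ((TendstoLocallyInMeasure.of_tendsto_Lp hy).add hnull).congr (fun i => ?_) (by simp)⟩
  rw [hsplit, map_add]
  exact (Lp.coeFn_add _ _).symm

end StochasticErgodicTheorem

end IsRadonNikodymCocycle

section Boxes

/-- The half-open box `(-T, T]^d` in `ℝ^d`. -/
def box (d : ℕ) (T : ℝ) : Set (Fin d → ℝ) :=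
  Set.univ.pi fun _ => Set.Ioc (-T) T

theorem mem_box {d : ℕ} {T : ℝ} {t : Fin d → ℝ} : t ∈ box d T ↔ ∀ j, -T < t j ∧ t j ≤ T := by
  simp [box]

theorem measurableSet_box (d : ℕ) (T : ℝ) : MeasurableSet (box d T) :=
  MeasurableSet.univ_pi fun _ => measurableSet_Ioc

theorem volume_box (d : ℕ) (T : ℝ) : volume (box d T) = ENNReal.ofReal (2 * T) ^ d := by
  simp [box, volume_pi_pi, two_mul]

theorem volume_box_ne_top (d : ℕ) (T : ℝ) : volume (box d T) ≠ ∞ := by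
  rw [volume_box]
  exact ENNReal.pow_ne_top ENNReal.ofReal_ne_top

theorem setAverage_box (d : ℕ) (T : ℝ) (f : (Fin d → ℝ) → ℝ) :
    ⨍ t in box d T, f t = ((2 * T) ^ d)⁻¹ * ∫ t in box d T, f t := by
  rw [setAverage_eq, smul_eq_mul]
  rcases le_total 0 T with hT | hT
  · rw [Measure.real, volume_box, ENNReal.toReal_pow, ENNReal.toReal_ofReal (by positivity)]
  · rcases eq_or_ne d 0 with rfl | hd
    · simp [Measure.real, volume_box]
    · have hzero : volume (box d T) = 0 := by
        rw [volume_box, ENNReal.ofReal_of_nonpos (by linarith), zero_pow hd]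
      rw [Measure.restrict_eq_zero.2 hzero, integral_zero_measure, mul_zero, mul_zero]

theorem vadd_box_symmDiff_subset {d : ℕ} (u : Fin d → ℝ) (T : ℝ) :
    (u +ᵥ box d T) ∆ box d T ⊆ box d (T + ‖u‖) \ box d (T - ‖u‖) := by
  have hu : ∀ j, -‖u‖ ≤ u j ∧ u j ≤ ‖u‖ := fun j => abs_le.1 (norm_le_pi_norm u j)
  have hnorm := norm_nonneg u
  have hmem : ∀ {t}, t ∈ u +ᵥ box d T ↔ ∀ j, -T < t j - u j ∧ t j - u j ≤ T := fun {t} => by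
    simp [Set.mem_vadd_set_iff_neg_vadd_mem, mem_box, neg_add_eq_sub]
  rintro t ht
  rw [Set.mem_symmDiff, hmem, mem_box] at ht
  rw [Set.mem_sdiff, mem_box, mem_box]
  refine ⟨fun j => ?_, fun hinner => ?_⟩
  · rcases ht with ⟨ht, -⟩ | ⟨ht, -⟩ <;> constructor <;> linarith [ht j, hu j]
  · rcases ht with ⟨-, ht⟩ | ⟨-, ht⟩ <;> refine ht fun j => ⟨?_, ?_⟩ <;>
      linarith [hinner j, hu j]

theorem tendsto_volume_box_sdiff_div (d : ℕ) {c : ℝ} (hc : 0 ≤ c) :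
    Tendsto (fun T => volume (box d (T + c) \ box d (T - c)) / volume (box d T)) atTop (𝓝 0) := by
  have hdiv : Tendsto (fun T : ℝ => c / T) atTop (𝓝 0) := tendsto_const_nhds.div_atTop tendsto_id
  have hlim : Tendsto (fun T : ℝ => ENNReal.ofReal ((1 + c / T) ^ d - (1 - c / T) ^ d))
      atTop (𝓝 0) := by
    simpa using ENNReal.tendsto_ofReal
      (((hdiv.const_add 1).pow d).sub ((hdiv.const_sub 1).pow d))
  refine hlim.congr' ?_
  filter_upwards [eventually_gt_atTop c] with T hT
  have hT0 : 0 < T := hc.trans_lt hT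
  have : 0 ≤ T - c := sub_nonneg.2 hT.le
  have hsubset : box d (T - c) ⊆ box d (T + c) :=
    Set.pi_mono fun _ _ => Set.Ioc_subset_Ioc (by linarith) (by linarith)
  rw [measure_sdiff hsubset (measurableSet_box _ _).nullMeasurableSet (volume_box_ne_top _ _),
    volume_box, volume_box, volume_box, ← ENNReal.ofReal_pow (by positivity),
    ← ENNReal.ofReal_pow (by positivity), ← ENNReal.ofReal_pow (by positivity),
    ← ENNReal.ofReal_sub _ (by positivity), ← ENNReal.ofReal_div_of_pos (by positivity), sub_div,
    ← div_pow, ← div_pow]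
  congr 4 <;> field_simp

theorem isAddFoelner_box (d : ℕ) : IsAddFoelner (Fin d → ℝ) volume atTop (box d) where
  eventually_measurableSet := .of_forall (measurableSet_box d)
  eventually_meas_ne_zero := by
    filter_upwards [eventually_gt_atTop 0] with T hT
    simp [volume_box, hT]
  eventually_meas_ne_top := .of_forall (volume_box_ne_top d)
  tendsto_meas_vadd_symmDiff u :=
    tendsto_of_tendsto_of_tendsto_of_le_of_le tendsto_const_nhds
      (tendsto_volume_box_sdiff_div d (norm_nonneg u)) (fun _ => zero_le)
      fun T => ENNReal.div_le_div_right (measure_mono (vadd_box_symmDiff_subset u T)) _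

end Boxes

theorem stmt7_general {ι G S : Type*} [AddCommGroup G] [MeasurableSpace G] [MeasurableAdd G]
    [MeasurableSpace S] {μ : Measure S} [SigmaFinite μ] {φ : G → S → S} {w : G → S → ℝ}
    (h : IsRadonNikodymCocycle μ φ w) {ν : Measure G} [ν.IsAddLeftInvariant] {l : Filter ι}
    [l.NeBot] {D : ι → Set G} (hD : IsAddFoelner G ν l D) {f : S → ℝ} (hf : Integrable f μ) :
    ∃ ftil : S → ℝ, Integrable ftil μ ∧
      TendstoLocallyInMeasure μ (fun i s => ⨍ t in D i, w t s * f (φ t s) ∂ν) l ftil ∧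
      ∀ t, ∀ᵐ s ∂μ, w t s * ftil (φ t s) = ftil s := by
  obtain ⟨y, hyfixed, hy⟩ := h.exists_tendstoLocallyInMeasure_koopmanIntegral hD hf.toL1
  refine ⟨y, L1.integrable_coeFn y, hy.congr (fun i => ?_) .rfl, fun t => ?_⟩
  · simp only [setAverage_eq']
    exact h.coeFn_koopmanIntegral_of_ae_eq ν[|D i] hf.coeFn_toL1
  · filter_upwards [h.coeFn_koopmanL1 t y] with s hs
    rw [← hs, hyfixed]

/-- Multiparameter stochastic ergodic theorem, continuous case: for a nonsingular
jointly measurable `ℝ^d`-action `{φ_t}` on a standard Borel space with σ-finite measure `μ`,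
with `w : ℝ^d × S → (0,∞)` jointly measurable such that `w(t,·)` is a version of the
Radon–Nikodym derivative of `A ↦ μ(φ_t(A))` (i.e. of `μ ∘ φ_{-t}⁻¹`) w.r.t. `μ` and
`w(t+h,s) = w(h,s)·w(t,φ_h(s))`, and `f₀ ∈ L¹(μ)`, the averages
`A_T f = (2T)^{-d} ∫_{(−T,T]^d} w(t,·) f₀(φ_t(·)) dt` converge locally in measure to some
`f̃ ∈ L¹(μ)` satisfying `w(t,s) f̃(φ_t(s)) = f̃(s)` a.e. for every `t`. -/
theorem stmt7 {S : Type*} [MeasurableSpace S] [StandardBorelSpace S]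
    (μ : Measure S) [SigmaFinite μ] (d : ℕ)
    (φ : (Fin d → ℝ) → S → S)
    (hφjoint : Measurable fun p : (Fin d → ℝ) × S => φ p.1 p.2)
    (hid : ∀ s, φ 0 s = s)
    (hcomp : ∀ u v s, φ (u + v) s = φ u (φ v s))
    (hns : ∀ t, μ.map (φ t) ≪ μ ∧ μ ≪ μ.map (φ t))
    (w : (Fin d → ℝ) → S → ℝ)
    (hwjoint : Measurable fun p : (Fin d → ℝ) × S => w p.1 p.2)
    (hwpos : ∀ t s, 0 < w t s)
    (hwver : ∀ t, (fun s => ENNReal.ofReal (w t s)) =ᵐ[μ] (μ.map (φ (-t))).rnDeriv μ)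
    (hwcoc : ∀ t h : Fin d → ℝ, ∀ s, w (t + h) s = w h s * w t (φ h s))
    (f₀ : S → ℝ) (hf₀ : Integrable f₀ μ) :
    ∃ ftil : S → ℝ, Integrable ftil μ ∧
      (∀ ε : ℝ, 0 < ε → ∀ B : Set S, MeasurableSet B → μ B < ⊤ →
        Tendsto (fun T : ℝ =>
          μ ({s | ε < |((2 * T) ^ d)⁻¹ *
              (∫ t in Set.univ.pi fun _ : Fin d => Set.Ioc (-T) T,
                w t s * f₀ (φ t s)) - ftil s|} ∩ B))
          atTop (nhds 0)) ∧
      (∀ t, ∀ᵐ s ∂μ, w t s * ftil (φ t s) = ftil s) := by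
  have h : IsRadonNikodymCocycle μ φ w :=
    ⟨hφjoint, hid, hcomp, fun t => (hns t).1, hwjoint, hwpos, hwver, hwcoc⟩
  obtain ⟨ftil, hint, hlim, hfixed⟩ := stmt7_general h (isAddFoelner_box d) hf₀
  refine ⟨ftil, hint, fun ε hε B hB hμB => ?_, hfixed⟩
  have hbox := hlim.tendsto_measure_lt_norm_sub_inter hε hB hμB
  simp only [setAverage_box] at hbox
  exact hbox
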